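/- For every finite nonempty set Y ⊆ V, every finite set P ⊆ V, and every integer k ≥ 1, the approximate potential penalty is bounded below by g'(Y,P,k) ≥ g(Y,P,k) − (k − 1) · ( f({r},P) − g(Y,P,k) ); equivalently, g'(Y,P,k) ≥ k · g(Y,P,k) − (k − 1) · f({r},P). -/

import Mathlib

open scoped Classical

/-- Pair-wise penalty `f⟨v,t⟩`: `dist(v,t) = depth t - depth v` if `v → t`,
and `dist(r,t) = depth t` otherwise. -/
noncomputable def fpair {V : Type*} (R : V → V → Prop) (depth : V → ℕ) (v t : V) : ℕ :=
  if R v t then depth t - depth v else depth t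

/-- Set penalty `f(S,t) = min_{v ∈ S ∪ {r}} f⟨v,t⟩`. -/
noncomputable def fsel {V : Type*} (R : V → V → Prop) (depth : V → ℕ) (r : V)
    (S : Finset V) (t : V) : ℕ :=
  (insert r S).inf' (Finset.insert_nonempty r S) fun v => fpair R depth v t

/-- Set-wise penalty `f(S,P) = Σ_{t ∈ P} f(S,t)`. -/
noncomputable def fsum {V : Type*} (R : V → V → Prop) (depth : V → ℕ) (r : V)
    (S : Finset V) (P : Finset V) : ℕ :=
  ∑ t ∈ P, fsel R depth r S t

/-- Potential penalty `g(Y,P,k) = min { f(S,P) : S ⊆ Y, S nonempty, |S| ≤ k }`. -/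
noncomputable def gpen {V : Type*} (R : V → V → Prop) (depth : V → ℕ) (r : V)
    (Y P : Finset V) (k : ℕ) : ℕ :=
  sInf {n : ℕ | ∃ S : Finset V, S ⊆ Y ∧ S.Nonempty ∧ S.card ≤ k ∧ n = fsum R depth r S P}

/-- Selected gain `IG(x) = |P ∩ des(x)| · dist(r,x)` (with `dist(r,x) = depth x`). -/
noncomputable def selGain {V : Type*} (R : V → V → Prop) (depth : V → ℕ)
    (P : Finset V) (x : V) : ℕ :=
  (P.filter fun t => R x t).card * depth x

/-- Approximate potential penalty
`g'(Y,P,k) = f({r},P) − max { Σ_{x ∈ S} IG(x) : S ⊆ Y, S nonempty, |S| ≤ k }`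
(as an integer, since the subtraction may be negative). -/
noncomputable def gapprox {V : Type*} (R : V → V → Prop) (depth : V → ℕ) (r : V)
    (Y P : Finset V) (k : ℕ) : ℤ :=
  (fsum R depth r {r} P : ℤ) -
    sSup {m : ℤ | ∃ S : Finset V, S ⊆ Y ∧ S.Nonempty ∧ S.card ≤ k ∧
      m = ∑ x ∈ S, (selGain R depth P x : ℤ)}

theorem gain_add_le {V : Type*} (R : V → V → Prop) (r : V) (depth : V → ℕ)
    (hdepth_root : depth r = 0)
    (hdepth_mono : ∀ u v, R u v → depth u ≤ depth v) (P : Finset V) (x : V) :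
    selGain R depth P x + fsum R depth r {x} P ≤ fsum R depth r {r} P := by
  have h1 : selGain R depth P x = ∑ t ∈ P, if R x t then depth x else 0 := by
    rw [selGain, Finset.card_eq_sum_ones, Finset.sum_mul, Finset.sum_filter]
    simp
  rw [h1, fsum, fsum, ← Finset.sum_add_distrib]
  refine Finset.sum_le_sum fun t _ => ?_
  have h2 : depth t ≤ fsel R depth r {r} t := by
    refine Finset.le_inf' _ _ fun v hv => ?_
    have hv' : v = r := by simpa using hv
    subst hv'
    unfold fpair
    split_ifs <;> omega
  have h3 : fsel R depth r {x} t ≤ fpair R depth x t :=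
    Finset.inf'_le (fun v => fpair R depth v t) (by simp)
  unfold fpair at h3
  by_cases h : R x t
  · have := hdepth_mono _ _ h
    simp only [h, if_true] at h3 ⊢
    omega
  · simp only [h, if_false] at h3 ⊢
    omega

/-- for every finite nonempty `Y ⊆ V`, finite `P ⊆ V`, and `k ≥ 1`,
`g'(Y,P,k) ≥ g(Y,P,k) − (k−1)·(f({r},P) − g(Y,P,k))`, equivalently
`g'(Y,P,k) ≥ k·g(Y,P,k) − (k−1)·f({r},P)`. -/
theorem stmt14 {V : Type*} [Fintype V] (R : V → V → Prop) (r : V) (depth : V → ℕ)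
    (hrefl : ∀ v, R v v)
    (htrans : ∀ u v w, R u v → R v w → R u w)
    (hanti : ∀ u v, R u v → R v u → u = v)
    (hroot : ∀ v, R r v)
    (hchain : ∀ u v w, R u v → R w v → R u w ∨ R w u)
    (hdepth_root : depth r = 0)
    (hdepth_mono : ∀ u v, R u v → depth u ≤ depth v)
    (hdepth_eq : ∀ u v, R u v → (depth u = depth v ↔ u = v))
    (Y P : Finset V) (hY : Y.Nonempty) (k : ℕ) (hk : 1 ≤ k) :
    gapprox R depth r Y P k ≥
        (gpen R depth r Y P k : ℤ) -
          ((k : ℤ) - 1) * ((fsum R depth r {r} P : ℤ) - (gpen R depth r Y P k : ℤ)) ∧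
      gapprox R depth r Y P k ≥
        (k : ℤ) * (gpen R depth r Y P k : ℤ) -
          ((k : ℤ) - 1) * (fsum R depth r {r} P : ℤ) := by
  have hx : ∀ x ∈ Y, (selGain R depth P x : ℤ) ≤
      (fsum R depth r {r} P : ℤ) - (gpen R depth r Y P k : ℤ) := by
    intro x hxY
    have h1 := gain_add_le R r depth hdepth_root hdepth_mono P x
    have h2 : gpen R depth r Y P k ≤ fsum R depth r {x} P :=
      Nat.sInf_le ⟨{x}, by simpa using hxY, by simp, by simpa using hk, rfl⟩
    omega
  have hmain : sSup {m : ℤ | ∃ S : Finset V, S ⊆ Y ∧ S.Nonempty ∧ S.card ≤ k ∧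
      m = ∑ x ∈ S, (selGain R depth P x : ℤ)} ≤
      (k : ℤ) * ((fsum R depth r {r} P : ℤ) - (gpen R depth r Y P k : ℤ)) := by
    obtain ⟨y, hy⟩ := hY
    have h0 : (0 : ℤ) ≤ (fsum R depth r {r} P : ℤ) - (gpen R depth r Y P k : ℤ) :=
      le_trans (Int.natCast_nonneg _) (hx y hy)
    refine csSup_le ⟨_, {y}, by simpa using hy, by simp, by simpa using hk, rfl⟩ ?_
    rintro m ⟨S, hSY, -, hSk, rfl⟩
    have h1 := Finset.sum_le_card_nsmul S (fun x => (selGain R depth P x : ℤ)) _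
      fun x hxS => hx x (hSY hxS)
    rw [nsmul_eq_mul] at h1
    refine h1.trans (mul_le_mul_of_nonneg_right ?_ h0)
    exact_mod_cast hSk
  unfold gapprox
  constructor <;> nlinarith [hmain]
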